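/- Let H be the cubic-like graph obtained from two disjoint copies of the complete bipartite graph K_{2,3} by adding two independent edges, each joining a degree-2 vertex of the first copy to a degree-2 vertex of the second copy (distinct endvertices in each copy). Then every semistrong matching of H containing at least 3 edges consists of the two added edges together with one further edge not adjacent to them, and the semistrong chromatic index of H equals 7. -/

import Mathlib

open SimpleGraph

variable {V : Type*}

/-- The set of endvertices of the edges in `M`. -/
def edgeVerts (M : Set (Sym2 V)) : Set V := {v | ∃ e ∈ M, v ∈ e}

/-- `M` is a matching of the simple graph `G`: a set of edges of `G`
that are pairwise disjoint. -/
def IsMatchingSet (G : SimpleGraph V) (M : Set (Sym2 V)) : Prop :=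
  M ⊆ G.edgeSet ∧ ∀ e ∈ M, ∀ f ∈ M, e ≠ f → ∀ v : V, v ∈ e → v ∉ f

/-- `M` is a semistrong matching of `G`: a matching such that every edge of `M`
has an endvertex of degree one in the subgraph of `G` induced by the
endvertices of the edges of `M`. -/
def IsSemistrongMatching (G : SimpleGraph V) (M : Set (Sym2 V)) : Prop :=
  IsMatchingSet G M ∧
    ∀ e ∈ M, ∃ u v : V, e = s(u, v) ∧ ∀ w ∈ edgeVerts M, G.Adj u w → w = v

/-- `G` has a semistrong edge-coloring with (at most) `k` colors: a proper
edge-coloring in which every color class is a semistrong matching. -/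
def HasSemistrongEdgeColoring (G : SimpleGraph V) (k : ℕ) : Prop :=
  ∃ c : Sym2 V → ℕ, (∀ e ∈ G.edgeSet, c e < k) ∧
    ∀ i : ℕ, IsSemistrongMatching G {e | e ∈ G.edgeSet ∧ c e = i}

/-- The semistrong chromatic index of `G`. -/
noncomputable def ssChromIdx (G : SimpleGraph V) : ℕ :=
  sInf {k | HasSemistrongEdgeColoring G k}

/-- The graph `H` obtained from two disjoint copies of `K_{2,3}` by adding two
independent edges joining distinct degree-2 vertices (vertices of the part of
size 3) of the first copy to distinct degree-2 vertices of the second copy. -/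
def twoK23Graph : SimpleGraph ((Fin 2 ⊕ Fin 3) ⊕ (Fin 2 ⊕ Fin 3)) :=
  SimpleGraph.fromRel (fun x y =>
    (∃ a b, x = Sum.inl (Sum.inl a) ∧ y = Sum.inl (Sum.inr b)) ∨
    (∃ a b, x = Sum.inr (Sum.inl a) ∧ y = Sum.inr (Sum.inr b)) ∨
    (x = Sum.inl (Sum.inr 0) ∧ y = Sum.inr (Sum.inr 0)) ∨
    (x = Sum.inl (Sum.inr 1) ∧ y = Sum.inr (Sum.inr 1)))

namespace TwoK23

/-- The vertex type of the graph. -/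
abbrev W := (Fin 2 ⊕ Fin 3) ⊕ (Fin 2 ⊕ Fin 3)

/-- Boolean adjacency. -/
def adjB : W → W → Bool
  | .inl (.inl _), .inl (.inr _) => true
  | .inl (.inr _), .inl (.inl _) => true
  | .inr (.inl _), .inr (.inr _) => true
  | .inr (.inr _), .inr (.inl _) => true
  | .inl (.inr a), .inr (.inr b) => decide (a = b ∧ a ≠ 2)
  | .inr (.inr a), .inl (.inr b) => decide (a = b ∧ a ≠ 2)
  | _, _ => false

lemma adj_iff (x y : W) : twoK23Graph.Adj x y ↔ adjB x y = true := by
  rcases x with (x | x) | (x | x) <;> rcases y with (y | y) | (y | y) <;>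
    simp [twoK23Graph, adjB] <;> revert x y <;> decide

/-- First ends of the 14 edges. -/
def src : Fin 14 → W :=
  ![.inl (.inl 0), .inl (.inl 0), .inl (.inl 0), .inl (.inl 1), .inl (.inl 1), .inl (.inl 1),
    .inr (.inl 0), .inr (.inl 0), .inr (.inl 0), .inr (.inl 1), .inr (.inl 1), .inr (.inl 1),
    .inl (.inr 0), .inl (.inr 1)]

/-- Second ends of the 14 edges. -/
def dst : Fin 14 → W :=
  ![.inl (.inr 0), .inl (.inr 1), .inl (.inr 2), .inl (.inr 0), .inl (.inr 1), .inl (.inr 2),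
    .inr (.inr 0), .inr (.inr 1), .inr (.inr 2), .inr (.inr 0), .inr (.inr 1), .inr (.inr 2),
    .inr (.inr 0), .inr (.inr 1)]

/-- The 14 edges. -/
def E (i : Fin 14) : Sym2 W := s(src i, dst i)

lemma E_mem (i : Fin 14) : E i ∈ twoK23Graph.edgeSet := by
  rw [E, SimpleGraph.mem_edgeSet, adj_iff]
  revert i; decide

lemma E_inj : Function.Injective E := by
  unfold Function.Injective
  decide +kernel

lemma exists_E : ∀ e ∈ twoK23Graph.edgeSet, ∃ i, e = E i := by
  intro e
  induction e using Sym2.ind with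
  | _ x y =>
    rw [SimpleGraph.mem_edgeSet, adj_iff]
    revert x y
    decide +kernel

/-- `u` is not adjacent to either end of edge `j`. -/
def non (u : W) (j : Fin 14) : Bool := !adjB u (src j) && !adjB u (dst j)

lemma triple_dec : ∀ i j k : Fin 14, i ≠ j → i ≠ k → j ≠ k →
    ((non (src i) j && non (src i) k) || (non (dst i) j && non (dst i) k)) = true →
    ((non (src j) i && non (src j) k) || (non (dst j) i && non (dst j) k)) = true →
    ((non (src k) i && non (src k) j) || (non (dst k) i && non (dst k) j)) = true →
    (i = 12 ∨ j = 12 ∨ k = 12) ∧ (i = 13 ∨ j = 13 ∨ k = 13) := by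
  decide +kernel

lemma non_of {M : Set (Sym2 W)} (h : IsSemistrongMatching twoK23Graph M) {i : Fin 14}
    (hi : E i ∈ M) :
    (∀ j, E j ∈ M → i ≠ j → non (src i) j = true) ∨
    (∀ j, E j ∈ M → i ≠ j → non (dst i) j = true) := by
  obtain ⟨⟨_, hd⟩, hs⟩ := h
  obtain ⟨u, v, huv, hw⟩ := hs _ hi
  have key : ∀ j, E j ∈ M → i ≠ j → non u j = true := by
    intro j hj hij
    have hv : v ∉ E j := hd _ hi _ hj (fun h => hij (E_inj h)) v (by rw [huv]; simp)
    have aux : ∀ w ∈ E j, adjB u w = false := by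
      intro w hwj
      by_contra hc
      have := hw w ⟨_, hj, hwj⟩ ((adj_iff _ _).2 (by simpa using hc))
      exact hv (this ▸ hwj)
    simp [non, aux (src j) (by simp [E]), aux (dst j) (by simp [E])]
  rw [E, Sym2.eq_iff] at huv
  rcases huv with ⟨rfl, rfl⟩ | ⟨rfl, rfl⟩
  · exact Or.inl key
  · exact Or.inr key

lemma triple {M : Set (Sym2 W)} (h : IsSemistrongMatching twoK23Graph M) {i j k : Fin 14}
    (hi : E i ∈ M) (hj : E j ∈ M) (hk : E k ∈ M) (hij : i ≠ j) (hik : i ≠ k) (hjk : j ≠ k) :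
    (i = 12 ∨ j = 12 ∨ k = 12) ∧ (i = 13 ∨ j = 13 ∨ k = 13) := by
  apply triple_dec i j k hij hik hjk
  · rcases non_of h hi with H | H <;> simp [H j hj hij, H k hk hik]
  · rcases non_of h hj with H | H <;> simp [H i hi hij.symm, H k hk hjk]
  · rcases non_of h hk with H | H <;> simp [H i hi hik.symm, H j hj hjk.symm]

lemma part_one (M : Finset (Sym2 W)) (h : IsSemistrongMatching twoK23Graph ↑M)
    (hc : 3 ≤ M.card) :
    ∃ e ∈ M, e ≠ E 12 ∧ e ≠ E 13 ∧ (M : Set (Sym2 W)) = {E 12, E 13, e} ∧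
      ∀ v, v ∈ e → v ∉ E 12 ∧ v ∉ E 13 := by
  have hE : ∀ e ∈ M, ∃ i, e = E i := fun e he => exists_E e (h.1.1 he)
  obtain ⟨a, b, c, ha, hb, hc', hab, hac, hbc⟩ := Finset.two_lt_card_iff.1 hc
  obtain ⟨i, rfl⟩ := hE a ha
  obtain ⟨j, rfl⟩ := hE b hb
  obtain ⟨k, rfl⟩ := hE c hc'
  have T := triple h ha hb hc' (fun h => hab (h ▸ rfl)) (fun h => hac (h ▸ rfl))
    (fun h => hbc (h ▸ rfl))
  have h12 : E 12 ∈ M := by rcases T.1 with rfl | rfl | rfl <;> assumption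
  have h13 : E 13 ∈ M := by rcases T.2 with rfl | rfl | rfl <;> assumption
  have : ∃ l, E l ∈ M ∧ l ≠ 12 ∧ l ≠ 13 := by
    by_contra! hcon
    have hsub : M ⊆ {E 12, E 13} := by
      intro e he
      obtain ⟨l, rfl⟩ := hE e he
      by_cases hl : l = 12
      · simp [hl]
      · simp [hcon l he hl]
    have := (Finset.card_le_card hsub).trans Finset.card_le_two
    omega
  obtain ⟨l, hl, hl12, hl13⟩ := this
  refine ⟨E l, hl, fun h => hl12 (E_inj h), fun h => hl13 (E_inj h), ?_, ?_⟩
  · ext e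
    constructor
    · intro he
      obtain ⟨m, rfl⟩ := hE e he
      by_contra hn
      simp only [Set.mem_insert_iff, Set.mem_singleton_iff, E_inj.eq_iff, not_or] at hn
      have := (triple h h12 hl he (Ne.symm hl12) (Ne.symm hn.1) (Ne.symm hn.2.2)).2
      rcases this with h | h | h
      · exact absurd h (by decide)
      · exact hl13 h
      · exact hn.2.1 h
    · rintro (rfl | rfl | rfl) <;> assumption
  · intro v hv
    exact ⟨h.1.2 _ hl _ h12 (fun h => hl12 (E_inj h)) v hv,
      h.1.2 _ hl _ h13 (fun h => hl13 (E_inj h)) v hv⟩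

lemma lower {k : ℕ} (h : HasSemistrongEdgeColoring twoK23Graph k) : 7 ≤ k := by
  by_contra! hk
  obtain ⟨c, hck, hc⟩ := h
  have hmaps : ∀ i ∈ (Finset.univ.erase 12 : Finset (Fin 14)), c (E i) ∈ Finset.range 6 := by
    intro i _
    have := hck _ (E_mem i)
    simp; omega
  obtain ⟨y, _, hy⟩ := Finset.exists_lt_card_fiber_of_mul_lt_card_of_maps_to (n := 2) hmaps
    (by simp)
  obtain ⟨i, j, l, hi, hj, hl, hij, hil, hjl⟩ := Finset.two_lt_card_iff.1 hy
  simp only [Finset.mem_filter, Finset.mem_erase, Finset.mem_univ, and_true] at hi hj hl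
  have := (triple (hc y) ⟨E_mem i, hi.2⟩ ⟨E_mem j, hj.2⟩ ⟨E_mem l, hl.2⟩ hij hil hjl).1
  rcases this with h | h | h
  · exact hi.1 h
  · exact hj.1 h
  · exact hl.1 h

/-- A colouring of the edges with seven colours. -/
def col : Fin 14 → ℕ := ![6, 5, 4, 3, 2, 1, 5, 4, 3, 2, 1, 0, 0, 0]

/-- The colouring on unordered pairs. -/
def colE (e : Sym2 W) : ℕ := ∑ i, if e = E i then col i else 0

lemma colE_E (i : Fin 14) : colE (E i) = col i := by
  simp [colE, E_inj.eq_iff]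

lemma col_dec : ∀ i : Fin 14, (∀ j, col j = col i → j ≠ i → non (src i) j = true) ∨
    (∀ j, col j = col i → j ≠ i → non (dst i) j = true) := by
  decide +kernel

lemma col_disj : ∀ i j : Fin 14, col i = col j → i ≠ j → ∀ v : W, v ∈ E i → v ∉ E j := by
  unfold E
  decide +kernel

lemma adjB_irrefl : ∀ u : W, adjB u u = false := by decide

lemma upper : HasSemistrongEdgeColoring twoK23Graph 7 := by
  refine ⟨colE, ?_, ?_⟩
  · intro e he
    obtain ⟨i, rfl⟩ := exists_E e he
    rw [colE_E]
    clear he; revert i; decide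
  · intro n
    refine ⟨⟨fun e he => he.1, ?_⟩, ?_⟩
    · rintro e ⟨he, hen⟩ f ⟨hf, hfn⟩ hne
      obtain ⟨i, rfl⟩ := exists_E e he
      obtain ⟨j, rfl⟩ := exists_E f hf
      rw [colE_E] at hen hfn
      exact col_disj i j (hen.trans hfn.symm) (fun h => hne (h ▸ rfl))
    · rintro e ⟨he, hen⟩
      obtain ⟨i, rfl⟩ := exists_E e he
      rw [colE_E] at hen
      have key : ∀ u v, E i = s(u, v) → (∀ j, col j = col i → j ≠ i → non u j = true) →
          ∃ u v : W, E i = s(u, v) ∧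
            ∀ w ∈ edgeVerts {e | e ∈ twoK23Graph.edgeSet ∧ colE e = n},
              twoK23Graph.Adj u w → w = v := by
        intro u v huv H
        refine ⟨u, v, huv, ?_⟩
        rintro w ⟨f, ⟨hf, hfn⟩, hwf⟩ hadj
        obtain ⟨j, rfl⟩ := exists_E f hf
        rw [colE_E] at hfn
        by_cases hji : j = i
        · subst hji
          rw [huv, Sym2.mem_iff] at hwf
          rcases hwf with rfl | rfl
          · exact absurd hadj (twoK23Graph.loopless.irrefl _)
          · rfl
        · have := H j (hfn.trans hen.symm) hji
          rw [adj_iff] at hadj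
          simp only [non, Bool.and_eq_true, Bool.not_eq_true'] at this
          rw [E, Sym2.mem_iff] at hwf
          rcases hwf with rfl | rfl
          · simp [this.1] at hadj
          · simp [this.2] at hadj
      rcases col_dec i with H | H
      · exact key _ _ rfl H
      · exact key _ _ Sym2.eq_swap H

end TwoK23

/-- Every semistrong matching of `H` containing at least `3` edges consists of
the two added edges together with one further edge not adjacent to them, and
the semistrong chromatic index of `H` equals `7`. -/
theorem twoK23Graph_semistrong :
    (∀ M : Finset (Sym2 ((Fin 2 ⊕ Fin 3) ⊕ (Fin 2 ⊕ Fin 3))),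
      IsSemistrongMatching twoK23Graph ↑M → 3 ≤ M.card →
        ∃ e ∈ M,
          e ≠ s(Sum.inl (Sum.inr 0), Sum.inr (Sum.inr 0)) ∧
          e ≠ s(Sum.inl (Sum.inr 1), Sum.inr (Sum.inr 1)) ∧
          (M : Set (Sym2 ((Fin 2 ⊕ Fin 3) ⊕ (Fin 2 ⊕ Fin 3)))) =
            {s(Sum.inl (Sum.inr 0), Sum.inr (Sum.inr 0)),
             s(Sum.inl (Sum.inr 1), Sum.inr (Sum.inr 1)), e} ∧
          (∀ v, v ∈ e →
            v ∉ s(Sum.inl (Sum.inr 0), Sum.inr (Sum.inr 0)) ∧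
            v ∉ s(Sum.inl (Sum.inr 1), Sum.inr (Sum.inr 1)))) ∧
    ssChromIdx twoK23Graph = 7 := by
  exact ⟨TwoK23.part_one, IsLeast.csInf_eq ⟨TwoK23.upper, fun _ h => TwoK23.lower h⟩⟩
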